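/- Let d, s be positive integers, p an odd prime, and r an integer such that d + p^s - d p^s ≤ r ≤ p^s, gcd(p,d) = 1, and p^s ≡ r (mod d), and let m = (p^s - r)/d or m = p^s - 1. Then, modulo p^{s+4}, sum_{k=0}^{m} (-1)^k (2dk+r) (r/d)_k^5 / (k!)^5 ≡ (-1)^{(r-p^s)/d} * sum_{k=0}^{(p^s-r)/d} ((r/d)_k^2 (1 - r/d)_k / (k!)^3) * ( p^s - p^{3s} * sum_{j=1}^{k} ( 1/(dj)^2 + 1/(dj-d+r)^2 ) ). -/

import Mathlib

open Finset

/-- Rising factorial `(x)_k = x(x+1)⋯(x+k-1)`. -/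
def poch (x : ℚ) (k : ℕ) : ℚ := ∏ i ∈ Finset.range k, (x + i)

/-- `a ≡ b (mod p^m)`: the `p`-adic valuation of `a - b` is at least `m`. -/
def pcong (p : ℕ) (m : ℕ) (a b : ℚ) : Prop :=
  a = b ∨ (m : ℤ) ≤ padicValRat p (a - b)

/-- Generalized harmonic number `H_m^{(ℓ)} = ∑_{k=1}^m 1/k^ℓ`. -/
def harm (m ℓ : ℕ) : ℚ := ∑ k ∈ Finset.Icc 1 m, 1 / (k : ℚ) ^ ℓ

/-- Product of `(c+h)^2 - V`. -/
def PP (c V : ℚ) (k : ℕ) : ℚ := ∏ h ∈ Finset.range k, ((c + h) ^ 2 - V)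

theorem poch_zero (x : ℚ) : poch x 0 = 1 := by simp [poch]

theorem poch_succ (x : ℚ) (k : ℕ) : poch x (k + 1) = poch x k * (x + k) := by
  simp [poch, Finset.prod_range_succ]

theorem poch_succ_left (x : ℚ) (k : ℕ) : poch x (k + 1) = x * poch (x + 1) k := by
  unfold poch
  rw [Finset.prod_range_succ', mul_comm]
  congr 1
  · simp
  · apply Finset.prod_congr rfl
    intro i _
    push_cast
    ring

theorem poch_add (x : ℚ) (i j : ℕ) : poch x (i + j) = poch x i * poch (x + i) j := by
  induction j with
  | zero => simp [poch_zero]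
  | succ j ih => rw [← add_assoc, poch_succ, poch_succ, ih]; push_cast; ring

theorem PP_zero (c V : ℚ) : PP c V 0 = 1 := by simp [PP]

theorem PP_succ (c V : ℚ) (k : ℕ) : PP c V (k + 1) = PP c V k * ((c + k) ^ 2 - V) := by
  simp [PP, Finset.prod_range_succ]

theorem PP_add (c V : ℚ) (i j : ℕ) : PP c V (i + j) = PP c V i * PP (c + i) V j := by
  induction j with
  | zero => simp [PP_zero]
  | succ j ih => rw [← add_assoc, PP_succ, PP_succ, ih]; push_cast; ring

theorem PP_sq (c : ℚ) (k : ℕ) : PP c 0 k = poch c k ^ 2 := by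
  induction k with
  | zero => simp [PP_zero, poch_zero]
  | succ k ih => rw [PP_succ, poch_succ, ih]; ring

theorem PP_t (c t : ℚ) (k : ℕ) : PP c (t ^ 2) k = poch (c + t) k * poch (c - t) k := by
  induction k with
  | zero => simp [PP_zero, poch_zero]
  | succ k ih => rw [PP_succ, poch_succ, poch_succ, ih]; ring

theorem poch_one (k : ℕ) : poch 1 k = k.factorial := by
  induction k with
  | zero => simp [poch_zero]
  | succ k ih => rw [poch_succ, ih, Nat.factorial_succ]; push_cast; ring

theorem poch_neg_of_lt (k j : ℕ) (h : k < j) : poch (-(k : ℚ)) j = 0 := by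
  unfold poch
  apply Finset.prod_eq_zero (Finset.mem_range.2 h)
  simp

theorem PP_ne (c V : ℚ) (k : ℕ) (h : ∀ i < k, (c + i) ^ 2 - V ≠ 0) : PP c V k ≠ 0 := by
  unfold PP
  exact Finset.prod_ne_zero_iff.2 (fun i hi => h i (Finset.mem_range.1 hi))

theorem poch_ne (c : ℚ) (k : ℕ) (h : ∀ i < k, c + i ≠ 0) : poch c k ≠ 0 := by
  unfold poch
  exact Finset.prod_ne_zero_iff.2 (fun i hi => h i (Finset.mem_range.1 hi))

/-- Summand of the Saalschütz sum. -/
def SF (b c V : ℚ) (k j : ℕ) : ℚ :=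
  poch b j * poch (-(k : ℚ)) j * poch (2 * c - 1 - b + k) j / (j.factorial * PP c V j)

theorem saal_aux (b c V : ℚ) (k J : ℕ) (h : ∀ i < J, (c + i) ^ 2 - V ≠ 0) :
    ∑ j ∈ range (J + 1), (((c + k) ^ 2 - V) * SF b c V (k + 1) j
      - ((c - b + k) ^ 2 - V) * SF b c V k j)
    = (2 * c - b + 2 * k) * poch b (J + 1) * poch (-(k : ℚ)) J * poch (2 * c - b + k) J /
      (J.factorial * PP c V J) := by
  induction J with
  | zero => simp [SF, poch_zero, PP_zero, poch_succ]; ring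
  | succ J ih =>
    rw [sum_range_succ, ih (fun i hi => h i (by omega))]
    have e1 : poch (-((k + 1 : ℕ) : ℚ)) (J + 1) = (-(k + 1 : ℚ)) * poch (-(k : ℚ)) J := by
      rw [poch_succ_left]; push_cast; ring_nf
    have e2 : poch (2 * c - 1 - b + k) (J + 1)
        = (2 * c - 1 - b + k) * poch (2 * c - b + k) J := by
      rw [poch_succ_left]; ring_nf
    have e3 : poch (2 * c - 1 - b + (k + 1 : ℕ)) (J + 1)
        = poch (2 * c - b + k) J * (2 * c - b + k + J) := by
      rw [← poch_succ]; push_cast; ring_nf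
    unfold SF
    rw [e1, e2, e3, poch_succ b (J + 1), poch_succ b J, poch_succ (-(k : ℚ)) J,
      poch_succ (2 * c - b + k) J, PP_succ, Nat.factorial_succ]
    have hP : PP c V J ≠ 0 := PP_ne _ _ _ (fun i hi => h i (by omega))
    have hJ : (c + J) ^ 2 - V ≠ 0 := h J (by omega)
    have hf : (J.factorial : ℚ) ≠ 0 := by exact_mod_cast J.factorial_ne_zero
    have hJ1 : ((J : ℚ) + 1) ≠ 0 := by positivity
    push_cast
    generalize poch b J = B
    generalize poch (-(k : ℚ)) J = K
    generalize poch (2 * c - b + k) J = Z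
    generalize PP c V J = P at *
    generalize (J.factorial : ℚ) = f at *
    generalize hQ : (c + J) ^ 2 - V = Q at *
    have hV : V = (c + J) ^ 2 - Q := by rw [← hQ]; ring
    subst hV
    field_simp
    ring

theorem SF_zero (b c V : ℚ) (k j : ℕ) (h : k < j) : SF b c V k j = 0 := by
  simp [SF, poch_neg_of_lt k j h]

theorem SF_sum (b c V : ℚ) (k M : ℕ) (h : k ≤ M) :
    ∑ j ∈ range (M + 1), SF b c V k j = ∑ j ∈ range (k + 1), SF b c V k j := by
  symm
  apply sum_subset
  · intro a; simp only [mem_range]; omega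
  · intro a _ h2
    simp only [mem_range] at h2
    exact SF_zero _ _ _ _ _ (by omega)

theorem saal0 (b c V : ℚ) (k : ℕ) (h : ∀ i < k, (c + i) ^ 2 - V ≠ 0) :
    ∑ j ∈ range (k + 1), SF b c V k j = PP (c - b) V k / PP c V k := by
  induction k with
  | zero => simp [SF, PP_zero, poch_zero]
  | succ k ih =>
    have h1 := saal_aux b c V k (k + 1) h
    rw [poch_neg_of_lt k (k + 1) (by omega), sum_sub_distrib, ← mul_sum, ← mul_sum,
      SF_sum b c V k (k + 1) (by omega), ih (fun i hi => h i (by omega))] at h1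
    have hP : PP c V k ≠ 0 := PP_ne _ _ _ (fun i hi => h i (by omega))
    have hk := h k (by omega)
    rw [PP_succ, PP_succ]
    rw [eq_div_iff (mul_ne_zero hP hk)]
    simp only [mul_zero, zero_mul, zero_div] at h1
    field_simp at h1
    linear_combination h1

theorem saal (b c V : ℚ) (k M : ℕ) (hM : k ≤ M) (h : ∀ i < k, (c + i) ^ 2 - V ≠ 0) :
    ∑ j ∈ range (M + 1), SF b c V k j = PP (c - b) V k / PP c V k := by
  rw [SF_sum _ _ _ _ _ hM, saal0 _ _ _ _ h]

/-- Summand of the Chu-Vandermonde sum. -/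
def CF (b c : ℚ) (k j : ℕ) : ℚ :=
  poch b j * poch (-(k : ℚ)) j / (j.factorial * poch c j)

theorem cv_aux (b c : ℚ) (k J : ℕ) (h : ∀ i < J, c + i ≠ 0) :
    ∑ j ∈ range (J + 1), ((c + k) * CF b c (k + 1) j - (c - b + k) * CF b c k j)
    = poch b (J + 1) * poch (-(k : ℚ)) J / (J.factorial * poch c J) := by
  induction J with
  | zero => simp [CF, poch_zero, poch_succ]
  | succ J ih =>
    rw [sum_range_succ, ih (fun i hi => h i (by omega))]
    have e1 : poch (-((k + 1 : ℕ) : ℚ)) (J + 1) = (-(k + 1 : ℚ)) * poch (-(k : ℚ)) J := by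
      rw [poch_succ_left]; push_cast; ring_nf
    unfold CF
    rw [e1, poch_succ b (J + 1), poch_succ b J, poch_succ (-(k : ℚ)) J,
      poch_succ c J, Nat.factorial_succ]
    have hP : poch c J ≠ 0 := poch_ne _ _ (fun i hi => h i (by omega))
    have hJ : c + J ≠ 0 := h J (by omega)
    have hf : (J.factorial : ℚ) ≠ 0 := by exact_mod_cast J.factorial_ne_zero
    have hJ1 : ((J : ℚ) + 1) ≠ 0 := by positivity
    push_cast
    field_simp
    ring

theorem CF_sum (b c : ℚ) (k M : ℕ) (h : k ≤ M) :
    ∑ j ∈ range (M + 1), CF b c k j = ∑ j ∈ range (k + 1), CF b c k j := by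
  symm
  apply sum_subset
  · intro a; simp only [mem_range]; omega
  · intro a _ h2
    simp only [mem_range] at h2
    simp [CF, poch_neg_of_lt k a (by omega)]

theorem cv0 (b c : ℚ) (k : ℕ) (h : ∀ i < k, c + i ≠ 0) :
    ∑ j ∈ range (k + 1), CF b c k j = poch (c - b) k / poch c k := by
  induction k with
  | zero => simp [CF, poch_zero]
  | succ k ih =>
    have h1 := cv_aux b c k (k + 1) h
    rw [poch_neg_of_lt k (k + 1) (by omega), sum_sub_distrib, ← mul_sum, ← mul_sum,
      CF_sum b c k (k + 1) (by omega), ih (fun i hi => h i (by omega))] at h1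
    have hP : poch c k ≠ 0 := poch_ne _ _ (fun i hi => h i (by omega))
    have hk := h k (by omega)
    rw [poch_succ, poch_succ]
    rw [eq_div_iff (mul_ne_zero hP hk)]
    simp only [mul_zero, zero_div] at h1
    field_simp at h1
    linear_combination h1

theorem cv (b c : ℚ) (k M : ℕ) (hM : k ≤ M) (h : ∀ i < k, c + i ≠ 0) :
    ∑ j ∈ range (M + 1), CF b c k j = poch (c - b) k / poch c k := by
  rw [CF_sum _ _ _ _ hM, cv0 _ _ _ h]

theorem tele (x : ℚ) (l N : ℕ) :
    ∑ k ∈ range (N + 1), (-1 : ℚ) ^ k * (x + 2 * k) * poch x k / k.factorial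
      * (poch (-(k : ℚ)) l * poch (x + k) l)
    = (-1) ^ N * poch x (N + 1) / N.factorial * (poch (x + N + 1) l * poch (-(N : ℚ)) l) := by
  induction N with
  | zero =>
    rcases Nat.eq_zero_or_pos l with h | h
    · subst h; simp [poch_zero, poch_succ]
    · have := poch_neg_of_lt 0 l h
      simp at this
      simp [this]
  | succ N ih =>
    rw [sum_range_succ, ih]
    have e1 : poch (-((N + 1 : ℕ) : ℚ)) l * (-(N + 1 : ℚ) + l)
        = (-(N + 1 : ℚ)) * poch (-(N : ℚ)) l := by
      have := poch_succ (-((N + 1 : ℕ) : ℚ)) l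
      rw [poch_succ_left] at this
      push_cast at this ⊢
      rw [← this]; ring_nf
    have e2 : poch (x + N + 1) l * (x + N + 1 + l) = (x + N + 1) * poch (x + N + 2) l := by
      rw [← poch_succ, poch_succ_left]; ring_nf
    have e3 : x + ((N + 1 : ℕ) : ℚ) + 1 = x + N + 2 := by push_cast; ring
    have e4 : x + ((N + 1 : ℕ) : ℚ) = x + N + 1 := by push_cast; ring
    have hf : (N.factorial : ℚ) ≠ 0 := by exact_mod_cast N.factorial_ne_zero
    have hN1 : ((N : ℚ) + 1) ≠ 0 := by positivity
    rw [e3, e4, poch_succ x (N + 1), Nat.factorial_succ]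
    have e5 : poch (-(N : ℚ)) l
        = poch (-((N + 1 : ℕ) : ℚ)) l * (-(N + 1 : ℚ) + l) / (-(N + 1 : ℚ)) := by
      rw [e1]; field_simp
    rw [e5, e4]
    have e6 : poch x (N + 1) * (x + N + 1) * (poch (x + N + 2) l * poch (-((N + 1 : ℕ) : ℚ)) l)
       = poch x (N + 1) * poch (-((N + 1 : ℕ) : ℚ)) l * (poch (x + N + 1) l * (x + N + 1 + l)) := by
      rw [e2]; ring
    have : (-1 : ℚ) ^ (N + 1) * (poch x (N + 1) * (x + N + 1)) / ((N + 1) * N.factorial : ℕ) *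
      (poch (x + N + 2) l * poch (-((N + 1 : ℕ) : ℚ)) l) =
      (-1 : ℚ) ^ (N + 1) / ((N + 1) * N.factorial : ℕ) * (poch x (N + 1) * (x + N + 1) *
      (poch (x + N + 2) l * poch (-((N + 1 : ℕ) : ℚ)) l)) := by ring
    rw [this, e6]
    generalize poch (-((N + 1 : ℕ) : ℚ)) l = K
    push_cast
    rw [pow_succ]
    field_simp
    ring

/-- The two-parameter deformation of the sum. -/
def SS (x U V : ℚ) (N : ℕ) : ℚ :=
  ∑ k ∈ range (N + 1), (-1 : ℚ) ^ k * (x + 2 * k) * poch x k / k.factorial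
      * (PP x U k / PP 1 U k * (PP x V k / PP 1 V k))

/-- The coefficients. -/
def cc (x U V : ℚ) (i j : ℕ) : ℚ :=
  poch (1 - x) i / (i.factorial * PP 1 U i) *
    (poch (1 - x) j * PP x V i / (j.factorial * PP 1 V (i + j)))

theorem expand (x U V : ℚ) (k N : ℕ) (hk : k ≤ N)
    (hU : ∀ i < N, (1 + (i : ℚ)) ^ 2 - U ≠ 0) (hV : ∀ i < N, (1 + (i : ℚ)) ^ 2 - V ≠ 0) :
    PP x U k / PP 1 U k * (PP x V k / PP 1 V k) =
    ∑ i ∈ range (N + 1), ∑ j ∈ range (N + 1),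
      cc x U V i j * (poch (-(k : ℚ)) (i + j) * poch (x + k) (i + j)) := by
  have h1 := saal (1 - x) 1 U k N hk (fun i hi => hU i (by omega))
  rw [show (1 : ℚ) - (1 - x) = x by ring] at h1
  rw [← h1, sum_mul]
  apply sum_congr rfl
  intro i hi
  rcases Nat.lt_or_ge k i with hki | hki
  · rw [SF_zero _ _ _ _ _ hki, zero_mul]
    symm
    apply sum_eq_zero
    intro j _
    rw [poch_neg_of_lt k (i + j) (by omega)]
    ring
  · obtain ⟨k', rfl⟩ := Nat.exists_eq_add_of_le hki
    have h2 := saal (1 - x) (1 + i) V k' N (by omega) (fun j hj => by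
      have := hV (i + j) (by omega)
      push_cast at this
      convert this using 3; ring)
    rw [show (1 + (i : ℚ)) - (1 - x) = x + i by ring] at h2
    rw [PP_add, PP_add 1 V, mul_div_mul_comm, ← h2, mul_sum, mul_sum]
    apply sum_congr rfl
    intro j _
    unfold SF cc
    rw [poch_add _ i j, poch_add _ i j, PP_add 1 V i j]
    rw [show 2 * (1 + (i : ℚ)) - 1 - (1 - x) + k' = x + ((i + k' : ℕ) : ℚ) + i by
      push_cast; ring]
    rw [show (2 * 1 - 1 - (1 - x) + ((i + k' : ℕ) : ℚ)) = x + ((i + k' : ℕ) : ℚ) by ring]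
    rw [show (-((i + k' : ℕ) : ℚ) + i) = -(k' : ℚ) by push_cast; ring]
    simp only [div_eq_mul_inv, mul_inv]
    ring

theorem SS_eq (x U V : ℚ) (N : ℕ)
    (hU : ∀ i < N, (1 + (i : ℚ)) ^ 2 - U ≠ 0) (hV : ∀ i < N, (1 + (i : ℚ)) ^ 2 - V ≠ 0) :
    SS x U V N = (-1) ^ N * poch x (N + 1) / N.factorial *
      ∑ i ∈ range (N + 1), ∑ j ∈ range (N + 1),
        cc x U V i j * (poch (x + N + 1) (i + j) * poch (-(N : ℚ)) (i + j)) := by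
  unfold SS
  have : ∀ k ∈ range (N + 1), (-1 : ℚ) ^ k * (x + 2 * k) * poch x k / k.factorial
      * (PP x U k / PP 1 U k * (PP x V k / PP 1 V k)) =
      ∑ i ∈ range (N + 1), ∑ j ∈ range (N + 1), cc x U V i j *
        ((-1 : ℚ) ^ k * (x + 2 * k) * poch x k / k.factorial
      * (poch (-(k : ℚ)) (i + j) * poch (x + k) (i + j))) := by
    intro k hk
    rw [expand x U V k N (by simp at hk; omega) hU hV, mul_sum]
    apply sum_congr rfl
    intro i _
    rw [mul_sum]
    apply sum_congr rfl
    intro j _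
    ring
  rw [sum_congr rfl this, sum_comm, mul_sum]
  apply sum_congr rfl
  intro i _
  rw [sum_comm, mul_sum]
  apply sum_congr rfl
  intro j _
  rw [← mul_sum, tele]
  ring

theorem poch_refl (x : ℚ) (n : ℕ) : poch (1 - (x + n)) n = (-1) ^ n * poch x n := by
  induction n generalizing x with
  | zero => simp [poch_zero]
  | succ n ih =>
    rw [poch_succ, poch_succ_left x, pow_succ]
    have := ih (x + 1)
    rw [show 1 - (x + ((n + 1 : ℕ) : ℚ)) = 1 - (x + 1 + n) by push_cast; ring, this]
    ring

theorem poch_neg_self (n : ℕ) : poch (-(n : ℚ)) n = (-1) ^ n * n.factorial := by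
  have := poch_refl 1 n
  rw [poch_one] at this
  rw [← this]; ring_nf

theorem SS_t (x t U : ℚ) (n : ℕ) (ht : t = x + n) (hx : ∀ i < n, x + i ≠ 0)
    (hU : ∀ i < n, (1 + (i : ℚ)) ^ 2 - U ≠ 0)
    (hV : ∀ i < n, (1 + (i : ℚ)) ^ 2 - t ^ 2 ≠ 0) :
    SS x U (t ^ 2) n = (-1) ^ n * t * ∑ i ∈ range (n + 1),
      poch (1 - x) i * PP x (t ^ 2) i / (i.factorial * PP 1 U i) := by
  rw [SS_eq x U (t ^ 2) n hU hV, mul_sum, mul_sum]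
  apply sum_congr rfl
  intro i hi
  have hin : i ≤ n := by simp at hi; omega
  obtain ⟨k, rfl⟩ := Nat.exists_eq_add_of_le hin
  have hne : ∀ h < i + k, (1 + (h : ℚ)) + t ≠ 0 ∧ (1 + (h : ℚ)) - t ≠ 0 := by
    intro h hh
    have := hV h hh
    constructor
    · intro h0; apply this
      rw [show (1 + (h : ℚ)) ^ 2 - t ^ 2 = ((1 + (h : ℚ)) + t) * ((1 + (h : ℚ)) - t) by ring, h0]
      ring
    · intro h0; apply this
      rw [show (1 + (h : ℚ)) ^ 2 - t ^ 2 = ((1 + (h : ℚ)) + t) * ((1 + (h : ℚ)) - t) by ring, h0]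
      ring
  have hterm : ∀ j ∈ range (i + k + 1), cc x U (t ^ 2) i j *
      (poch (x + (i + k : ℕ) + 1) (i + j) * poch (-((i + k : ℕ) : ℚ)) (i + j)) =
      poch (1 - x) i * PP x (t ^ 2) i / (i.factorial * PP 1 U i) *
       (poch (-((i + k : ℕ) : ℚ)) i / poch (1 - t) i) * CF (1 - x) (1 - t + i) k j := by
    intro j _
    rcases Nat.lt_or_ge k j with hkj | hkj
    · rw [poch_neg_of_lt (i + k) (i + j) (by omega)]
      simp [CF, poch_neg_of_lt k j hkj]
    · unfold cc CF
      rw [PP_t 1 t (i + j), ← ht, poch_add (-((i + k : ℕ) : ℚ)) i j, poch_add (1 - t) i j,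
        add_comm t 1]
      rw [show (-((i + k : ℕ) : ℚ) + i) = -(k : ℚ) by push_cast; ring]
      have h1 : poch (1 + t) (i + j) ≠ 0 := poch_ne _ _ (fun h hh => by
        have := (hne h (by omega)).1
        intro h0; apply this; rw [← h0]; ring)
      generalize poch (1 + t) (i + j) = T at *
      simp only [div_eq_mul_inv, mul_inv]
      field_simp
  rw [sum_congr rfl hterm, ← mul_sum, cv _ _ _ _ (by omega) (fun h hh => by
    have := (hne (i + h) (by omega)).2
    intro h0; apply this; rw [← h0]; push_cast; ring)]
  have e1 : poch (1 - t) (i + k) = (-1) ^ (i + k) * poch x (i + k) := by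
    rw [ht, poch_refl]
  have e2 : poch (-((i + k : ℕ) : ℚ)) (i + k) = (-1) ^ (i + k) * (i + k).factorial :=
    poch_neg_self _
  have hx0 : poch x (i + k) ≠ 0 := poch_ne _ _ hx
  have hf : ((i + k).factorial : ℚ) ≠ 0 := by exact_mod_cast (i + k).factorial_ne_zero
  rw [poch_add] at e1 e2
  rw [show (-((i + k : ℕ) : ℚ) + i) = -(k : ℚ) by push_cast; ring] at e2
  rw [show (1 - t + (i : ℚ) - (1 - x)) = -(k : ℚ) by rw [ht]; push_cast; ring]
  rw [poch_succ, ← ht]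
  have e3 : poch (-((i + k : ℕ) : ℚ)) i / poch (1 - t) i * (poch (-(k : ℚ)) k / poch (1 - t + i) k)
     = (i + k).factorial / poch x (i + k) := by
    rw [div_mul_div_comm, e1, e2]
    field_simp
  rw [mul_assoc (poch (1 - x) i * PP x (t ^ 2) i / (i.factorial * PP 1 U i)), e3]
  field_simp

/-- `x ∈ p^e Z_(p)`. -/
def dv (p e : ℕ) (x : ℚ) : Prop := padicNorm p x ≤ (p : ℚ) ^ (-(e : ℤ))

section pad
variable {p : ℕ} [hp : Fact p.Prime]

theorem p_pos' : (0 : ℚ) < p := by exact_mod_cast hp.out.pos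

theorem p_one' : (1 : ℚ) < p := by exact_mod_cast hp.out.one_lt

theorem dv_zero (e : ℕ) : dv p e 0 := by
  unfold dv; simp only [padicNorm.zero]; have := p_pos' (p := p); positivity

theorem dv_add {e : ℕ} {a b : ℚ} (ha : dv p e a) (hb : dv p e b) : dv p e (a + b) :=
  padicNorm.nonarchimedean.trans (max_le ha hb)

theorem dv_neg {e : ℕ} {a : ℚ} (ha : dv p e a) : dv p e (-a) := by
  unfold dv; rw [padicNorm.neg]; exact ha

theorem dv_sub {e : ℕ} {a b : ℚ} (ha : dv p e a) (hb : dv p e b) : dv p e (a - b) := by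
  rw [sub_eq_add_neg]; exact dv_add ha (dv_neg hb)

theorem dv_mul {e f : ℕ} {a b : ℚ} (ha : dv p e a) (hb : dv p f b) : dv p (e + f) (a * b) := by
  unfold dv at *
  rw [padicNorm.mul]
  have h0 := p_pos' (p := p)
  have : (p : ℚ) ^ (-((e + f : ℕ) : ℤ)) = (p : ℚ) ^ (-(e : ℤ)) * (p : ℚ) ^ (-(f : ℤ)) := by
    rw [← zpow_add₀ h0.ne']; congr 1; push_cast; ring
  rw [this]
  exact mul_le_mul ha hb (padicNorm.nonneg _) (by positivity)

theorem dv_mono {e f : ℕ} {a : ℚ} (h : f ≤ e) (ha : dv p e a) : dv p f a := by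
  unfold dv at *
  refine ha.trans (zpow_le_zpow_right₀ (p_one' (p := p)).le (by omega))

theorem dv_mul0 {e : ℕ} {a b : ℚ} (ha : dv p 0 a) (hb : dv p e b) : dv p e (a * b) := by
  have := dv_mul ha hb
  rwa [zero_add] at this

theorem dv_mul22 {a b : ℚ} (ha : dv p 2 a) (hb : dv p 2 b) : dv p 4 (a * b) := by
  have h := dv_mul ha hb
  norm_num at h
  exact h

theorem dv_mul11 {a b : ℚ} (ha : dv p 1 a) (hb : dv p 1 b) : dv p 2 (a * b) := by
  have h := dv_mul ha hb
  norm_num at h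
  exact h

theorem dv_int (z : ℤ) : dv p 0 z := by
  unfold dv; simpa using padicNorm.of_int z

theorem dv_nat (z : ℕ) : dv p 0 z := by
  have := dv_int (p := p) z
  simpa using this

theorem dv_sum {α : Type} {e : ℕ} (S : Finset α) (f : α → ℚ) (h : ∀ i ∈ S, dv p e (f i)) :
    dv p e (∑ i ∈ S, f i) := by
  have := p_pos' (p := p)
  exact padicNorm.sum_le' h (by positivity)

theorem dv_ppow (s : ℕ) : dv p s ((p : ℚ) ^ s) := by
  have h := (padicNorm.dvd_iff_norm_le (p := p) (n := s) (z := (p : ℤ) ^ s)).1 (by push_cast; rfl)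
  unfold dv
  exact_mod_cast h

theorem dv_inv_int (z : ℤ) (h : ¬ (p : ℤ) ∣ z) : dv p 0 (1 / (z : ℚ)) := by
  unfold dv
  rw [padicNorm.div, (padicNorm.int_eq_one_iff z).2 h]
  simp

theorem norm_one_sub {w : ℚ} (h : dv p 1 w) : padicNorm p (1 - w) = 1 := by
  have h1 : padicNorm p (-w) < 1 := by
    rw [padicNorm.neg]
    refine lt_of_le_of_lt h ?_
    have := p_one' (p := p)
    simp only [Nat.cast_one, zpow_neg, zpow_one]
    exact inv_lt_one_of_one_lt₀ this
  have h2 : padicNorm p (1 : ℚ) = 1 := padicNorm.one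
  rw [sub_eq_add_neg, padicNorm.add_eq_max_of_ne (by rw [h2]; exact h1.ne'), h2]
  exact max_eq_left h1.le

theorem ne_one_sub {w : ℚ} (h : dv p 1 w) : 1 - w ≠ 0 := by
  intro h0
  have := norm_one_sub h
  rw [h0] at this
  simp at this

theorem dv_inv {w : ℚ} (h : dv p 1 w) : dv p 0 (1 / (1 - w)) := by
  unfold dv
  rw [padicNorm.div, norm_one_sub h]
  simp

theorem dv_div_int {s : ℕ} {t : ℚ} (ht : dv p s t) (z : ℤ) (hz : z ≠ 0) (hlt : |z| < (p : ℤ) ^ s) :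
    dv p 1 (t / z) := by
  have hnd : ¬ ((p ^ s : ℕ) : ℤ) ∣ z := by
    intro h
    have := Int.eq_zero_of_abs_lt_dvd h (by push_cast; exact hlt)
    exact hz this
  rw [padicNorm.dvd_iff_norm_le, not_le] at hnd
  have hzq : (z : ℚ) ≠ 0 := by exact_mod_cast hz
  have h1 := p_one' (p := p)
  have h0 := p_pos' (p := p)
  rw [padicNorm.eq_zpow_of_nonzero hzq, zpow_lt_zpow_iff_right₀ h1] at hnd
  unfold dv at *
  rw [padicNorm.div, padicNorm.eq_zpow_of_nonzero hzq, div_le_iff₀ (by positivity)]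
  refine ht.trans ?_
  rw [← zpow_add₀ h0.ne']
  apply zpow_le_zpow_right₀ h1.le
  push_cast
  omega

theorem dv_half (hodd : Odd p) {e : ℕ} {a : ℚ} (h : dv p e (2 * a)) : dv p e a := by
  unfold dv at *
  rw [padicNorm.mul] at h
  have : padicNorm p ((2 : ℤ) : ℚ) = 1 := by
    rw [padicNorm.int_eq_one_iff]
    intro h
    have h2 : p ∣ 2 := by exact_mod_cast h
    have := (Nat.prime_dvd_prime_iff_eq hp.out Nat.prime_two).1 h2
    subst this
    exact absurd hodd (by decide)
  push_cast at this
  rwa [this, one_mul] at h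

theorem dv_pcong {m : ℕ} {a b : ℚ} (h : dv p m (a - b)) : pcong p m a b := by
  unfold pcong
  by_cases hab : a = b
  · exact Or.inl hab
  · right
    have h0 : a - b ≠ 0 := sub_ne_zero.2 hab
    unfold dv at h
    rw [padicNorm.eq_zpow_of_nonzero h0, zpow_le_zpow_iff_right₀ (p_one' (p := p))] at h
    omega

theorem dv_poch {x : ℚ} (hx : dv p 0 x) (k : ℕ) : dv p 0 (poch x k / k.factorial) := by
  have hx' : ‖(x : ℚ_[p])‖ ≤ 1 := by
    rw [Padic.eq_padicNorm]
    unfold dv at hx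
    simp at hx
    exact_mod_cast hx
  let y : ℤ_[p] := ⟨x, hx'⟩
  have h1 := Ring.factorial_nsmul_multichoose_eq_ascPochhammer y k
  rw [Polynomial.ascPochhammer_smeval_eq_eval] at h1
  have h2 : ∀ k : ℕ, (((ascPochhammer ℤ_[p] k).eval y : ℤ_[p]) : ℚ_[p]) = ((poch x k : ℚ) : ℚ_[p]) := by
    intro k
    induction k with
    | zero => simp [poch_zero]
    | succ k ih =>
      rw [ascPochhammer_succ_eval, poch_succ]
      push_cast
      rw [ih]
  have h3 := h2 k
  rw [← h1] at h3
  have hf : (k.factorial : ℚ_[p]) ≠ 0 := by exact_mod_cast k.factorial_ne_zero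
  have h4 : ((poch x k / k.factorial : ℚ) : ℚ_[p]) = ((Ring.multichoose y k : ℤ_[p]) : ℚ_[p]) := by
    push_cast
    rw [← h3]
    push_cast [nsmul_eq_mul]
    field_simp
  have h5 : ‖((poch x k / k.factorial : ℚ) : ℚ_[p])‖ ≤ 1 := by
    rw [h4]; exact PadicInt.norm_le_one _
  rw [Padic.eq_padicNorm] at h5
  unfold dv
  simp only [Nat.cast_zero, neg_zero, zpow_zero]
  exact_mod_cast h5

theorem dv_beta {s : ℕ} {t : ℚ} (ht : dv p s t) (h n : ℕ) (hlt : n + h + 1 < p ^ s) :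
    dv p 1 (t * (n.factorial * h.factorial / (n + h + 1).factorial)) := by
  induction h generalizing n with
  | zero =>
    have := dv_div_int ht ((n + 1 : ℕ) : ℤ) (by positivity) (by
      rw [abs_of_nonneg (by positivity)]; exact_mod_cast hlt)
    convert this using 1
    simp only [Nat.factorial_succ, add_zero, Nat.factorial_zero]
    have hf : (n.factorial : ℚ) ≠ 0 := by exact_mod_cast n.factorial_ne_zero
    push_cast
    field_simp
  | succ h ih =>
    have h1 := ih n (by omega)
    have h2 := ih (n + 1) (by omega)
    convert dv_sub h1 h2 using 1
    rw [show n + (h + 1) + 1 = (n + h + 1) + 1 by ring, show n + 1 + h + 1 = (n + h + 1) + 1 by ring,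
      Nat.factorial_succ (n + h + 1), Nat.factorial_succ n, Nat.factorial_succ h]
    have hf : ((n + h + 1).factorial : ℚ) ≠ 0 := by exact_mod_cast Nat.factorial_ne_zero _
    have hg : (n : ℚ) + h + 1 + 1 ≠ 0 := by positivity
    push_cast
    field_simp
    ring

theorem dv_poch_gt {s n : ℕ} {x t : ℚ} (hx : t = x + n) (hs : 0 < s) (ht : dv p s t) (i : ℕ) (hni : n < i)
    (hi : i < p ^ s) : dv p 1 (poch x i / i.factorial) := by
  obtain ⟨h, rfl⟩ := Nat.exists_eq_add_of_lt hni
  have ht0 : dv p 0 t := dv_mono (by omega) ht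
  have h1 : dv p 0 (poch (1 - t) n / n.factorial) :=
    dv_poch (dv_sub (by simpa using dv_int (p := p) 1) ht0) n
  have h2 : dv p 0 (poch (t + 1) h / h.factorial) :=
    dv_poch (dv_add ht0 (by simpa using dv_int (p := p) 1)) h
  have h3 := dv_beta ht h n hi
  have h4 : dv p 0 ((-1 : ℚ) ^ n) := by simpa using dv_int (p := p) ((-1) ^ n)
  have h5 := dv_mul0 h4 (dv_mul0 h1 (dv_mul0 h2 h3))
  convert h5 using 1
  have e : poch (1 - t) n = (-1) ^ n * poch x n := by rw [hx, poch_refl]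
  rw [e, show n + h + 1 = n + (1 + h) by ring, poch_add, poch_add, ← hx]
  have e2 : poch t 1 = t := by simp [poch_succ, poch_zero]
  rw [e2]
  have hf : (n.factorial : ℚ) ≠ 0 := by exact_mod_cast n.factorial_ne_zero
  have hg : (h.factorial : ℚ) ≠ 0 := by exact_mod_cast h.factorial_ne_zero
  have hh : ((-1 : ℚ) ^ n) * (-1) ^ n = 1 := by rw [← mul_pow]; simp
  push_cast
  field_simp
  linear_combination -(t * poch (t + 1) h * poch x n) * hh

/-- First-order-odd families. -/
def Good (p : ℕ) (f : ℚ → ℚ) : Prop :=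
  dv p 0 (f 0) ∧ dv p 2 (f 1 - f 0) ∧ dv p 4 (f 1 + f (-1) - 2 * f 0)

theorem dv_two : dv p 0 (2 : ℚ) := by simpa using dv_int (p := p) 2

theorem dv_one : dv p 0 (1 : ℚ) := by simpa using dv_int (p := p) 1

theorem good_const {c : ℚ} (h : dv p 0 c) : Good p (fun _ => c) :=
  ⟨h, by simpa using dv_zero 2, by
    rw [show c + c - 2 * c = 0 by ring]; exact dv_zero 4⟩

theorem good_mul {f g : ℚ → ℚ} (hf : Good p f) (hg : Good p g) : Good p (fun e => f e * g e) := by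
  obtain ⟨f0, f1, f2⟩ := hf
  obtain ⟨g0, g1, g2⟩ := hg
  have f3 : dv p 2 (f (-1) - f 0) := by
    rw [show f (-1) - f 0 = (f 1 + f (-1) - 2 * f 0) - (f 1 - f 0) by ring]
    exact dv_sub (dv_mono (by norm_num) f2) f1
  have g3 : dv p 2 (g (-1) - g 0) := by
    rw [show g (-1) - g 0 = (g 1 + g (-1) - 2 * g 0) - (g 1 - g 0) by ring]
    exact dv_sub (dv_mono (by norm_num) g2) g1
  refine ⟨dv_mul0 f0 g0, ?_, ?_⟩
  · rw [show f 1 * g 1 - f 0 * g 0 = f 0 * (g 1 - g 0) + g 0 * (f 1 - f 0)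
      + (f 1 - f 0) * (g 1 - g 0) by ring]
    exact dv_add (dv_add (dv_mul0 f0 g1) (dv_mul0 g0 f1)) (dv_mono (by norm_num) (dv_mul22 f1 g1))
  · rw [show f 1 * g 1 + f (-1) * g (-1) - 2 * (f 0 * g 0) =
      f 0 * (g 1 + g (-1) - 2 * g 0) + g 0 * (f 1 + f (-1) - 2 * f 0)
      + ((f 1 - f 0) * (g 1 - g 0) + (f (-1) - f 0) * (g (-1) - g 0)) by ring]
    exact dv_add (dv_add (dv_mul0 f0 g2) (dv_mul0 g0 f2)) (dv_add (dv_mul22 f1 g1) (dv_mul22 f3 g3))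

theorem good_prod {α : Type} [DecidableEq α] (S : Finset α) (f : α → ℚ → ℚ) (h : ∀ i ∈ S, Good p (f i)) :
    Good p (fun e => ∏ i ∈ S, f i e) := by
  induction S using Finset.induction_on with
  | empty => simpa using good_const dv_one
  | insert a S ha ih =>
    simp only [Finset.prod_insert ha]
    exact good_mul (h a (by simp)) (ih (fun i hi => h i (by simp [hi])))

theorem good_lin {w : ℚ} (h : dv p 2 w) : Good p (fun e => 1 - e * w) := by
  refine ⟨by simpa using dv_one, ?_, ?_⟩
  · rw [show 1 - 1 * w - (1 - 0 * w) = -w by ring]; exact dv_neg h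
  · rw [show 1 - 1 * w + (1 - -1 * w) - 2 * (1 - 0 * w) = 0 by ring]; exact dv_zero 4

theorem good_inv {w : ℚ} (h : dv p 2 w) : Good p (fun e => 1 / (1 - e * w)) := by
  have h1 : dv p 1 w := dv_mono (by norm_num) h
  have h2 : dv p 1 (-w) := dv_neg h1
  have n1 := ne_one_sub h1
  have n2 := ne_one_sub h2
  have n2' : 1 + w ≠ 0 := by rwa [sub_neg_eq_add] at n2
  refine ⟨by simpa using dv_one, ?_, ?_⟩
  · rw [show 1 / (1 - 1 * w) - 1 / (1 - 0 * w) = (1 / (1 - w)) * w by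
      rw [one_mul, zero_mul, sub_zero]; field_simp; ring]
    exact dv_mul0 (dv_inv h1) h
  · rw [show 1 / (1 - 1 * w) + 1 / (1 - -1 * w) - 2 * (1 / (1 - 0 * w))
        = 2 * ((1 / (1 - w)) * ((1 / (1 - -w)) * (w * w))) by
      rw [one_mul, zero_mul, sub_zero, neg_one_mul, sub_neg_eq_add]; field_simp; ring]
    exact dv_mul0 dv_two (dv_mul0 (dv_inv h1) (dv_mul0 (dv_inv h2) (dv_mul22 h h)))

theorem good_van {w : ℚ} (h : dv p 2 w) : Good p (fun e => w * (1 - e)) := by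
  refine ⟨by simpa using dv_mono (by norm_num) h, ?_, ?_⟩
  · rw [show w * (1 - 1) - w * (1 - 0) = -w by ring]; exact dv_neg h
  · rw [show w * (1 - 1) + w * (1 - -1) - 2 * (w * (1 - 0)) = 0 by ring]; exact dv_zero 4

end pad

section mainpart
variable {p : ℕ} [hp : Fact p.Prime]

theorem w_one {s : ℕ} {t : ℚ} (ht : dv p s t) (h : ℕ) (hh : h + 1 < p ^ s) :
    dv p 2 (t ^ 2 / (1 + (h : ℚ)) ^ 2) := by
  have h1 := dv_div_int ht ((h + 1 : ℕ) : ℤ) (by positivity) (by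
      rw [abs_of_nonneg (by positivity)]; exact_mod_cast hh)
  have h2 := dv_mul11 h1 h1
  convert h2 using 1
  push_cast
  rw [div_mul_div_comm]
  ring

theorem w_x {s n : ℕ} {x t : ℚ} (ht : dv p s t) (htx : t = x + n) (hn : n < p ^ s) (h : ℕ)
    (hh : h < p ^ s) (hne : h ≠ n) : x + h ≠ 0 ∧ dv p 2 (t ^ 2 / (x + h) ^ 2) := by
  have hz : ((n : ℤ) - h) ≠ 0 := by omega
  have hn' : (n : ℤ) < (p : ℤ) ^ s := by exact_mod_cast hn
  have hh' : (h : ℤ) < (p : ℤ) ^ s := by exact_mod_cast hh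
  have h1 := dv_div_int ht ((n : ℤ) - h) hz (by rw [abs_lt]; constructor <;> omega)
  have hzq : (((n : ℤ) - h : ℤ) : ℚ) ≠ 0 := by exact_mod_cast hz
  have e : x + h = -(((n : ℤ) - h : ℤ) : ℚ) * (1 - t / (((n : ℤ) - h : ℤ) : ℚ)) := by
    field_simp
    rw [htx]; push_cast; ring
  have hne1 := ne_one_sub h1
  refine ⟨by rw [e]; exact mul_ne_zero (neg_ne_zero.2 hzq) hne1, ?_⟩
  have h2 := dv_mul0 (dv_inv h1) h1
  have h3 := dv_mul11 h2 h2
  convert h3 using 1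
  rw [e]
  generalize (((n : ℤ) - h : ℤ) : ℚ) = z at *
  generalize 1 - t / z = y at *
  field_simp

theorem ne_of_w {T : ℚ} (h : ℕ) (hw : dv p 2 (T / (1 + (h : ℚ)) ^ 2)) :
    (1 + (h : ℚ)) ^ 2 - T ≠ 0 := by
  have h1 := ne_one_sub (dv_mono (by norm_num : 1 ≤ 2) hw)
  have h2 : (1 + (h : ℚ)) ≠ 0 := by positivity
  have e : (1 + (h : ℚ)) ^ 2 - T = (1 + (h : ℚ)) ^ 2 * (1 - T / (1 + (h : ℚ)) ^ 2) := by
    field_simp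
  rw [e]
  exact mul_ne_zero (pow_ne_zero 2 h2) h1

theorem PP_split (c T : ℚ) (k : ℕ) (hc : ∀ h < k, c + h ≠ 0) :
    PP c T k = poch c k ^ 2 * ∏ h ∈ range k, (1 - T / (c + h) ^ 2) := by
  unfold PP poch
  rw [← prod_pow, ← prod_mul_distrib]
  apply prod_congr rfl
  intro h hh
  have := hc h (mem_range.1 hh)
  field_simp

theorem good_den {T : ℚ} (l : ℕ) (hT : ∀ h < l, dv p 2 (T / (1 + (h : ℚ)) ^ 2)) :
    Good p (fun e => (l.factorial : ℚ) ^ 2 / PP 1 (e * T) l) := by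
  have h1 := good_prod (p := p) (range l) (fun h e => 1 / (1 - e * (T / (1 + (h : ℚ)) ^ 2)))
    (fun h hh => good_inv (hT h (mem_range.1 hh)))
  convert h1 using 2 with e
  rw [PP_split _ _ _ (fun h _ => by positivity), poch_one]
  have hf : (l.factorial : ℚ) ≠ 0 := by exact_mod_cast l.factorial_ne_zero
  rw [prod_div_distrib, prod_const_one, ← div_div, div_self (pow_ne_zero 2 hf)]
  simp only [mul_div_assoc]

theorem good_num {s n : ℕ} {x t : ℚ} (hs : 0 < s) (hx0 : dv p 0 x) (ht : dv p s t) (htx : t = x + n)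
    (ht0 : t ≠ 0) (hn : n < p ^ s) (i : ℕ) (hi : i < p ^ s) :
    Good p (fun e => PP x (e * t ^ 2) i / (i.factorial : ℚ) ^ 2) := by
  have hne : ∀ h < i, x + h ≠ 0 := by
    intro h hh
    by_cases hhn : h = n
    · rw [hhn, ← htx]; exact ht0
    · exact (w_x ht htx hn h (by omega) hhn).1
  by_cases hin : i ≤ n
  · have h1 := good_prod (p := p) (range i) (fun h e => (1 - e * (t ^ 2 / (x + (h : ℚ)) ^ 2)))
      (fun h hh => good_lin (w_x ht htx hn h (by simp at hh; omega) (by simp at hh; omega)).2)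
    have h2 := dv_poch hx0 i
    convert good_mul (good_const (dv_mul0 h2 h2)) h1 using 2 with e
    rw [PP_split _ _ _ hne]
    simp only [mul_div_assoc]
    ring
  · have h1 := good_prod (p := p) ((range i).erase n) (fun h e => (1 - e * (t ^ 2 / (x + (h : ℚ)) ^ 2)))
      (fun h hh => good_lin (w_x ht htx hn h (by simp at hh; omega) (by simp at hh; omega)).2)
    have h2 := dv_poch_gt htx hs ht i (by omega) hi
    convert good_mul (good_van (dv_mul11 h2 h2)) h1 using 2 with e
    rw [PP_split _ _ _ hne, ← mul_prod_erase (range i) _ (mem_range.2 (by omega : n < i)), ← htx]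
    rw [mul_div_assoc e, div_self (pow_ne_zero 2 ht0)]
    simp only [mul_div_assoc]
    ring

theorem main_cong {s n : ℕ} {x t : ℚ} (hs : 0 < s) (hx0 : dv p 0 x) (ht : dv p s t) (htx : t = x + n)
    (ht0 : t ≠ 0) (hn : n < p ^ s) (N : ℕ) (hN : N < p ^ s)
    (hpre : dv p s (poch x (N + 1) / N.factorial)) :
    dv p (s + 4) (SS x (-t ^ 2) (t ^ 2) N + SS x (t ^ 2) (-t ^ 2) N - 2 * SS x 0 0 N) := by
  have hw : ∀ h < N, dv p 2 (t ^ 2 / (1 + (h : ℚ)) ^ 2) := fun h hh => w_one ht h (by omega)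
  have hw' : ∀ h < N, dv p 2 (-t ^ 2 / (1 + (h : ℚ)) ^ 2) := fun h hh => by
    rw [neg_div]; exact dv_neg (hw h hh)
  have hw0 : ∀ h < N, dv p 2 (0 / (1 + (h : ℚ)) ^ 2) := fun h hh => by
    rw [zero_div]; exact dv_zero 2
  let f : ℕ → ℕ → ℚ → ℚ := fun i j e => cc x (e * (-t ^ 2)) (e * t ^ 2) i j *
    (poch (x + N + 1) (i + j) * poch (-(N : ℚ)) (i + j))
  have hf : ∀ i j, Good p (f i j) := by
    intro i j
    by_cases hl : N < i + j
    · have : f i j = fun _ => 0 := by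
        funext e
        simp only [f]
        rw [poch_neg_of_lt N _ hl]; ring
      rw [this]
      exact good_const (dv_zero 0)
    · have hNx : dv p 0 (x + N + 1) := dv_add (dv_add hx0 (dv_nat N)) dv_one
      have hNn : dv p 0 (-(N : ℚ)) := dv_neg (dv_nat N)
      have hx1 : dv p 0 (1 - x) := dv_sub dv_one hx0
      have c0 := dv_mul0 (dv_poch hx1 i) (dv_mul0 (dv_poch hx1 j)
        (dv_mul0 (dv_poch hNx (i + j)) (dv_poch hNn (i + j))))
      have g1 := good_num hs hx0 ht htx ht0 hn i (by omega)
      have g2 := good_den (p := p) i (fun h hh => hw' h (by omega))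
      have g3 := good_den (p := p) (i + j) (fun h hh => hw h (by omega))
      convert good_mul (good_const c0) (good_mul g1 (good_mul g2 g3)) using 2 with e
      simp only [f, cc]
      have hf1 : (i.factorial : ℚ) ≠ 0 := by exact_mod_cast i.factorial_ne_zero
      have hf2 : ((i + j).factorial : ℚ) ≠ 0 := by exact_mod_cast (i + j).factorial_ne_zero
      simp only [div_eq_mul_inv, mul_inv]
      field_simp
  have e1 := SS_eq x (-t ^ 2) (t ^ 2) N (fun h hh => ne_of_w h (hw' h hh)) (fun h hh => ne_of_w h (hw h hh))
  have e2 := SS_eq x (t ^ 2) (-t ^ 2) N (fun h hh => ne_of_w h (hw h hh)) (fun h hh => ne_of_w h (hw' h hh))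
  have e3 := SS_eq x 0 0 N (fun h hh => ne_of_w h (hw0 h hh)) (fun h hh => ne_of_w h (hw0 h hh))
  have key : SS x (-t ^ 2) (t ^ 2) N + SS x (t ^ 2) (-t ^ 2) N - 2 * SS x 0 0 N =
      (-1) ^ N * (poch x (N + 1) / N.factorial) * ∑ i ∈ range (N + 1), ∑ j ∈ range (N + 1),
        (f i j 1 + f i j (-1) - 2 * f i j 0) := by
    rw [e1, e2, e3]
    simp only [sum_add_distrib, sum_sub_distrib, ← mul_sum, f]
    simp only [one_mul, zero_mul, neg_mul, neg_neg, mul_neg]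
    ring
  rw [key]
  have hm1 : dv p 0 ((-1 : ℚ) ^ N) := by simpa using dv_int (p := p) ((-1) ^ N)
  exact dv_mul (dv_mul0 hm1 hpre)
    (dv_sum _ _ (fun i _ => dv_sum _ _ (fun j _ => (hf i j).2.2)))

theorem SS_comm (x U V : ℚ) (N : ℕ) : SS x U V N = SS x V U N := by
  unfold SS
  apply sum_congr rfl
  intro k _
  rw [mul_comm (PP x U k / _)]

theorem SS_trunc (x t U : ℚ) (n m : ℕ) (htx : t = x + n) (hnm : n ≤ m) :
    SS x U (t ^ 2) m = SS x U (t ^ 2) n := by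
  unfold SS
  symm
  apply sum_subset
  · intro a; simp only [mem_range]; omega
  · intro a _ h2
    simp only [mem_range] at h2
    have : PP x (t ^ 2) a = 0 := by
      unfold PP
      apply prod_eq_zero (mem_range.2 (by omega : n < a))
      rw [htx]; ring
    rw [this]; ring

theorem first_order (i : ℕ) (a b : ℕ → ℚ) (ha : ∀ h < i, dv p 2 (a h)) (hb : ∀ h < i, dv p 2 (b h)) :
    dv p 4 (∏ h ∈ range i, ((1 - a h) * (1 / (1 + b h))) - (1 - ∑ h ∈ range i, (b h + a h)))
    ∧ dv p 2 (∑ h ∈ range i, (b h + a h)) := by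
  induction i with
  | zero => simp [dv_zero]
  | succ i ih =>
    obtain ⟨h1, h2⟩ := ih (fun h hh => ha h (by omega)) (fun h hh => hb h (by omega))
    have hai := ha i (by omega)
    have hbi := hb i (by omega)
    rw [prod_range_succ, sum_range_succ]
    refine ⟨?_, dv_add h2 (dv_add hbi hai)⟩
    generalize ∏ h ∈ range i, ((1 - a h) * (1 / (1 + b h))) = Q at *
    generalize ∑ h ∈ range i, (b h + a h) = S at *
    generalize a i = A at *
    generalize b i = B at *
    have hB1 : dv p 1 (-B) := dv_neg (dv_mono (by norm_num) hbi)
    have hn := ne_one_sub hB1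
    have hi := dv_inv hB1
    rw [sub_neg_eq_add] at hn hi
    have hA : dv p 0 (1 - A) := dv_sub dv_one (dv_mono (by norm_num) hai)
    have e : Q * ((1 - A) * (1 / (1 + B))) - (1 - (S + (B + A))) =
       ((1 - A) * (1 / (1 + B))) * (Q - (1 - S)) + (1 / (1 + B)) * (B * (B + A) + S * (B + A)) := by
      field_simp
      ring
    rw [e]
    exact dv_add (dv_mul0 (dv_mul0 hA hi) h1) (dv_mul0 hi
      (dv_add (dv_mul22 hbi (dv_add hbi hai)) (dv_mul22 h2 (dv_add hbi hai))))

theorem rhs_inner (d x t q r : ℚ) (hd : d ≠ 0) (hq : q = d * t) (hr : r = d * x) (k : ℕ)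
    (hne : ∀ h < k, x + h ≠ 0) :
    q ^ 3 * ∑ j ∈ Finset.Icc 1 k, (1 / (d * j) ^ 2 + 1 / (d * j - d + r) ^ 2)
     = q * ∑ h ∈ range k, (t ^ 2 / (1 + (h : ℚ)) ^ 2 + t ^ 2 / (x + h) ^ 2) := by
  induction k with
  | zero => simp
  | succ k ih =>
    rw [Finset.sum_Icc_succ_top (by omega), sum_range_succ, mul_add, mul_add,
      ih (fun h hh => hne h (by omega))]
    congr 1
    have h1 := hne k (by omega)
    have h2 : (1 + (k : ℚ)) ≠ 0 := by positivity
    have e1 : d * ((k + 1 : ℕ) : ℚ) = d * (1 + k) := by push_cast; ring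
    have e2 : d * ((k + 1 : ℕ) : ℚ) - d + r = d * (x + k) := by rw [hr]; push_cast; ring
    rw [e2, e1, hq]
    field_simp

theorem final_cong {s n : ℕ} {x t : ℚ} (hs : 0 < s) (hodd : Odd p) (hx0 : dv p 0 x) (ht : dv p s t)
    (htx : t = x + n) (ht0 : t ≠ 0) (hn : n < p ^ s) (m : ℕ) (hm : m = n ∨ m = p ^ s - 1) :
    dv p (s + 4) (SS x 0 0 m - (-1) ^ n * t * ∑ k ∈ range (n + 1),
      (poch x k ^ 2 * poch (1 - x) k / (k.factorial : ℚ) ^ 3) *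
        (1 - ∑ h ∈ range k, (t ^ 2 / (1 + (h : ℚ)) ^ 2 + t ^ 2 / (x + h) ^ 2))) := by
  have hnm : n ≤ m := by omega
  have hmq : m < p ^ s := by omega
  have hne : ∀ h < n, x + h ≠ 0 := fun h hh => (w_x ht htx hn h (by omega) (by omega)).1
  have hpre : dv p s (poch x (m + 1) / m.factorial) := by
    rcases hm with h | h
    · subst h
      rw [poch_succ, ← htx, mul_div_right_comm]
      exact dv_mul0 (dv_poch hx0 m) ht
    · have hm1 : m + 1 = p ^ s := by omega
      have h1 := dv_mul0 (dv_poch hx0 (m + 1)) (dv_ppow (p := p) s)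
      convert h1 using 1
      have e : ((p : ℚ) ^ s) = (m : ℚ) + 1 := by exact_mod_cast hm1.symm
      rw [e, Nat.factorial_succ]
      have hf1 : (m.factorial : ℚ) ≠ 0 := by exact_mod_cast m.factorial_ne_zero
      have : (m : ℚ) + 1 ≠ 0 := by positivity
      push_cast
      field_simp
  have h1 := main_cong hs hx0 ht htx ht0 hn m hmq hpre
  rw [SS_comm x (t ^ 2) (-t ^ 2)] at h1
  have h2 : dv p (s + 4) (SS x (-t ^ 2) (t ^ 2) m - SS x 0 0 m) := by
    apply dv_half hodd
    convert h1 using 1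
    ring
  have hw : ∀ h < n, dv p 2 (t ^ 2 / (1 + (h : ℚ)) ^ 2) := fun h hh => w_one ht h (by omega)
  have hw' : ∀ h < n, dv p 2 (-t ^ 2 / (1 + (h : ℚ)) ^ 2) := fun h hh => by
    rw [neg_div]; exact dv_neg (hw h hh)
  rw [SS_trunc x t _ n m htx hnm, SS_t x t (-t ^ 2) n htx hne
    (fun h hh => ne_of_w h (hw' h hh)) (fun h hh => ne_of_w h (hw h hh))] at h2
  have h3 : dv p (s + 4) ((-1) ^ n * t * ∑ k ∈ range (n + 1),
      (poch (1 - x) k * PP x (t ^ 2) k / (k.factorial * PP 1 (-t ^ 2) k) -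
      (poch x k ^ 2 * poch (1 - x) k / (k.factorial : ℚ) ^ 3) *
        (1 - ∑ h ∈ range k, (t ^ 2 / (1 + (h : ℚ)) ^ 2 + t ^ 2 / (x + h) ^ 2)))) := by
    have hm1 : dv p 0 ((-1 : ℚ) ^ n) := by simpa using dv_int (p := p) ((-1) ^ n)
    refine dv_mul (dv_mul0 hm1 ht) (dv_sum _ _ (fun k hk => ?_))
    have hkn : k ≤ n := by simp at hk; omega
    have fo := (first_order (p := p) k (fun h => t ^ 2 / (x + h) ^ 2)
      (fun h => t ^ 2 / (1 + (h : ℚ)) ^ 2)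
      (fun h hh => (w_x ht htx hn h (by omega) (by omega)).2) (fun h hh => hw h (by omega))).1
    have c1 := dv_poch hx0 k
    have c2 := dv_poch (dv_sub dv_one hx0) k
    convert dv_mul0 (dv_mul0 (dv_mul0 c1 c1) c2) fo using 1
    rw [PP_split x _ k (fun h hh => hne h (by omega)), PP_split 1 _ k (fun h _ => by positivity),
      poch_one, prod_mul_distrib, prod_div_distrib, prod_const_one]
    simp only [neg_div, sub_neg_eq_add]
    simp only [div_eq_mul_inv, mul_inv]
    ring
  rw [sum_sub_distrib, mul_sub] at h3
  convert dv_sub h3 h2 using 1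
  ring

end mainpart

theorem stmt14 (d s : ℕ) (hd : 0 < d) (hs : 0 < s) (p : ℕ) (hp : p.Prime) (hodd : Odd p)
    (r : ℤ) (hr1 : (d : ℤ) + p ^ s - d * p ^ s ≤ r) (hr2 : r ≤ (p : ℤ) ^ s)
    (hgcd : Nat.gcd p d = 1) (hmod : ((p : ℤ) ^ s) ≡ r [ZMOD (d : ℤ)])
    (m₀ : ℕ) (hm₀ : (m₀ : ℤ) * d = (p : ℤ) ^ s - r)
    (m : ℕ) (hm : m = m₀ ∨ m = p ^ s - 1) :
    pcong p (s + 4)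
      (∑ k ∈ Finset.range (m + 1),
        (-1 : ℚ) ^ k * ((2 * d * k : ℚ) + r) * poch ((r : ℚ) / d) k ^ 5 /
          (k.factorial : ℚ) ^ 5)
      ((-1 : ℚ) ^ ((r - (p : ℤ) ^ s) / d) *
        ∑ k ∈ Finset.range (m₀ + 1),
          (poch ((r : ℚ) / d) k ^ 2 * poch (1 - (r : ℚ) / d) k / (k.factorial : ℚ) ^ 3) *
          ((p : ℚ) ^ s - (p : ℚ) ^ (3 * s) *
            ∑ j ∈ Finset.Icc 1 k,
              (1 / ((d : ℚ) * j) ^ 2 + 1 / ((d : ℚ) * j - d + r) ^ 2))) := by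
  have : Fact p.Prime := ⟨hp⟩
  have hdq : (d : ℚ) ≠ 0 := by exact_mod_cast hd.ne'
  have hndvd : ¬ (p : ℤ) ∣ (d : ℤ) := by
    intro h
    have h1 : p ∣ d := by exact_mod_cast h
    have h2 : p ∣ Nat.gcd p d := Nat.dvd_gcd dvd_rfl h1
    rw [hgcd] at h2
    exact hp.one_lt.ne' (Nat.dvd_one.1 h2)
  have hdinv : dv p 0 (1 / (d : ℚ)) := by simpa using dv_inv_int (d : ℤ) hndvd
  have hx0 : dv p 0 ((r : ℚ) / d) := by
    rw [div_eq_mul_one_div]; exact dv_mul0 (dv_int r) hdinv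
  have ht : dv p s ((p : ℚ) ^ s / d) := by
    rw [div_eq_mul_one_div, mul_comm]; exact dv_mul0 hdinv (dv_ppow s)
  have hm₀q : (m₀ : ℚ) * d = (p : ℚ) ^ s - r := by exact_mod_cast hm₀
  have htx : (p : ℚ) ^ s / d = (r : ℚ) / d + m₀ := by
    field_simp; linarith
  have hpq : (p : ℚ) ≠ 0 := by exact_mod_cast hp.ne_zero
  have ht0 : (p : ℚ) ^ s / d ≠ 0 := div_ne_zero (pow_ne_zero _ hpq) hdq
  have hn : m₀ < p ^ s := by
    have hd' : (0 : ℤ) < d := by exact_mod_cast hd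
    have h1 : (m₀ : ℤ) * d ≤ ((p : ℤ) ^ s - 1) * d := by rw [hm₀]; linarith
    have h2 := le_of_mul_le_mul_right h1 hd'
    have h3 : (m₀ : ℤ) < (p : ℤ) ^ s := by linarith
    exact_mod_cast h3
  have hfin := final_cong hs hodd hx0 ht htx ht0 hn m hm
  have hexp : (r - (p : ℤ) ^ s) / d = -(m₀ : ℤ) := by
    have : r - (p : ℤ) ^ s = -(m₀ : ℤ) * d := by linarith
    rw [this]
    exact Int.mul_ediv_cancel _ (by exact_mod_cast hd.ne')
  have hsign : (-1 : ℚ) ^ (-(m₀ : ℤ)) = (-1) ^ m₀ := by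
    rw [zpow_neg, zpow_natCast, ← inv_pow]; norm_num
  apply dv_pcong
  rw [hexp, hsign]
  convert dv_mul0 (dv_nat (p := p) d) hfin using 1
  rw [mul_sub]
  congr 1
  · unfold SS
    rw [mul_sum]
    apply sum_congr rfl
    intro k _
    rw [PP_sq, PP_sq, poch_one]
    field_simp
    ring
  · rw [show (d : ℚ) * ((-1) ^ m₀ * ((p : ℚ) ^ s / d) * ∑ k ∈ range (m₀ + 1),
      (poch ((r : ℚ) / d) k ^ 2 * poch (1 - (r : ℚ) / d) k / (k.factorial : ℚ) ^ 3) *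
        (1 - ∑ h ∈ range k, (((p : ℚ) ^ s / d) ^ 2 / (1 + (h : ℚ)) ^ 2 +
          ((p : ℚ) ^ s / d) ^ 2 / ((r : ℚ) / d + h) ^ 2))) =
      (-1) ^ m₀ * ((p : ℚ) ^ s * ∑ k ∈ range (m₀ + 1),
      (poch ((r : ℚ) / d) k ^ 2 * poch (1 - (r : ℚ) / d) k / (k.factorial : ℚ) ^ 3) *
        (1 - ∑ h ∈ range k, (((p : ℚ) ^ s / d) ^ 2 / (1 + (h : ℚ)) ^ 2 +
          ((p : ℚ) ^ s / d) ^ 2 / ((r : ℚ) / d + h) ^ 2))) by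
        rw [show (p : ℚ) ^ s = d * ((p : ℚ) ^ s / d) by field_simp]
        simp only [mul_div_cancel_left₀ _ hdq]
        ring]
    congr 1
    rw [mul_sum]
    apply sum_congr rfl
    intro k hk
    have hk' : k ≤ m₀ := by simp at hk; omega
    have hri := rhs_inner (d : ℚ) ((r : ℚ) / d) ((p : ℚ) ^ s / d) ((p : ℚ) ^ s) r hdq
      (by field_simp) (by field_simp) k
      (fun h hh => (w_x ht htx hn h (by omega) (by omega)).1)
    rw [mul_comm 3 s, pow_mul, hri]
    ring
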